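/- arXiv:1512.06016 — 6 statements merged into one kernel-verified Lean document; each statement's English description precedes it below -/
import Mathlib

section
/- Let W : ℝ → ℝ be a C² function such that W(ξ) → W₊ as ξ → +∞ and W(ξ) → W₋ as ξ → −∞ with W₊ > 0 and W₋ > 0, and such that W''(ξ) → 0 as ξ → ±∞. Let K denote the set of all C² functions v : ℝ → ℝ with v, v'' ∈ L²(ℝ) satisfying −v'' + W v = 0. Then there exists a constant C > 0 such that for every C² function u : ℝ → ℝ with u, u', u'' ∈ L²(ℝ) and ∫_ℝ u v = 0 for all v ∈ K, one has ∫_ℝ (−u'' + W u)² ≥ C² ∫_ℝ (u² + (u')² + (u'')²). -/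
/-!
Write `L u = -u'' + W u = f`. Two estimates, valid for every `u` in the domain, carry the proof.

* `gronwall`: since `W` is bounded, `u(x)² + u'(x)²` is at most `exp ((M + 2)|x|)` times
  `u(0)² + u'(0)² + ‖f‖²`.
* `coercive`: `∫ (u'² + W u²) = ∫ u f`, and `W ≥ m > 0` off a compact interval, on which `gronwall`
  bounds `u`. Hence `‖u‖² + ‖u'‖²` is at most a constant times `u(0)² + u'(0)² + ‖f‖²`.

Modulo `‖L u‖`, the `H²` norm is thus controlled by the two numbers `u(0)`, `u'(0)`, and
compactness is needed only in the plane. If no bound `u(0)² + u'(0)² ≤ D ‖L u‖²` held on the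
orthogonal complement of the kernel, there would be `uₙ` in it with unit data at `0` and
`L uₙ → 0` in `L²`. After passing to a subsequence the data converge, so by `gronwall` the `uₙ`
converge locally uniformly with their derivatives, and by Fatou the limit `v` lies in the kernel
(`exists_limit`). Applying `coercive` to `uₙ - v` gives `uₙ → v` in `L²`; as `uₙ ⊥ v`, this forces
`v = 0`, against the unit data (`data_le`). The bound on `u''` comes from `u'' = W u - f`.
-/

open MeasureTheory Filter

/-! ### Square integrable solutions of `-u'' + W u = f` -/

/-- `H2Sol W u p f` says that `u` (of class `C²` if `W` is continuous) solves `-u'' + W u = f`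
with `u' = p`, `f` continuous, and
that `u`, `u'`, `f` are square integrable. Writing the equation as a first order system keeps
`u'' = W u - f` explicit, so that it need not be tracked separately. -/
structure H2Sol (W u p f : ℝ → ℝ) : Prop where
  du : ∀ x, HasDerivAt u (p x) x
  dp : ∀ x, HasDerivAt p (W x * u x - f x) x
  cf : Continuous f
  iu : Integrable (fun x => (u x) ^ 2)
  ip : Integrable (fun x => (p x) ^ 2)
  if2 : Integrable (fun x => (f x) ^ 2)

lemma integrable_mul_of_sq {u f : ℝ → ℝ} (hu : Continuous u) (hf : Continuous f)
    (iu : Integrable (fun x => (u x) ^ 2)) (jf : Integrable (fun x => (f x) ^ 2)) :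
    Integrable (fun x => u x * f x) := by
  refine (iu.add jf).mono' (hu.mul hf).aestronglyMeasurable (Eventually.of_forall fun x => ?_)
  simp only [Real.norm_eq_abs, Pi.add_apply]
  rw [abs_le]
  constructor <;> nlinarith [sq_nonneg (u x + f x), sq_nonneg (u x - f x)]

lemma integrable_sub_sq {u f : ℝ → ℝ} (hu : Continuous u) (hf : Continuous f)
    (iu : Integrable (fun x => (u x) ^ 2)) (jf : Integrable (fun x => (f x) ^ 2)) :
    Integrable (fun x => (u x - f x) ^ 2) := by
  have h := (iu.add jf).sub ((integrable_mul_of_sq hu hf iu jf).const_mul 2)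
  refine h.congr (Eventually.of_forall fun x => ?_)
  simp only [Pi.add_apply, Pi.sub_apply]
  ring

namespace H2Sol

variable {W u p f v q g : ℝ → ℝ}

lemma cu (h : H2Sol W u p f) : Continuous u :=
  continuous_iff_continuousAt.2 fun x => (h.du x).continuousAt

lemma cp (h : H2Sol W u p f) : Continuous p :=
  continuous_iff_continuousAt.2 fun x => (h.dp x).continuousAt

lemma sub (h : H2Sol W u p f) (k : H2Sol W v q g) :
    H2Sol W (fun x => u x - v x) (fun x => p x - q x) (fun x => f x - g x) where
  du x := (h.du x).sub (k.du x)
  dp x := ((h.dp x).sub (k.dp x)).congr_deriv (by ring)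
  cf := h.cf.sub k.cf
  iu := integrable_sub_sq h.cu k.cu h.iu k.iu
  ip := integrable_sub_sq h.cp k.cp h.ip k.ip
  if2 := integrable_sub_sq h.cf k.cf h.if2 k.if2

lemma smul (c : ℝ) (h : H2Sol W u p f) :
    H2Sol W (fun x => c * u x) (fun x => c * p x) (fun x => c * f x) where
  du x := (h.du x).const_mul c
  dp x := ((h.dp x).const_mul c).congr_deriv (by ring)
  cf := h.cf.const_mul c
  iu := by simpa only [mul_pow] using h.iu.const_mul (c ^ 2)
  ip := by simpa only [mul_pow] using h.ip.const_mul (c ^ 2)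
  if2 := by simpa only [mul_pow] using h.if2.const_mul (c ^ 2)

end H2Sol

/-! ### Pointwise energy estimate -/

lemma gronwall_right {W u p f : ℝ → ℝ} {M : ℝ} (hM : ∀ x, |W x| ≤ M)
    (du : ∀ x, HasDerivAt u (p x) x) (dp : ∀ x, HasDerivAt p (W x * u x - f x) x)
    (cf : Continuous f) (jf : Integrable (fun x => (f x) ^ 2)) {x : ℝ} (hx : 0 ≤ x) :
    u x ^ 2 + p x ^ 2 ≤ Real.exp ((M + 2) * x) * (u 0 ^ 2 + p 0 ^ 2 + ∫ t, (f t) ^ 2) := by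
  set K := M + 2 with hK
  have hM0 : 0 ≤ M := (abs_nonneg _).trans (hM 0)
  -- The energy with its exponential growth and the contribution of the source removed.
  set h : ℝ → ℝ := fun y =>
    Real.exp (-(K * y)) * (u y ^ 2 + p y ^ 2) - ∫ t in (0 : ℝ)..y, (f t) ^ 2 with hh
  have cf2 : Continuous (fun t => (f t) ^ 2) := cf.pow 2
  have dh : ∀ y, HasDerivAt h (Real.exp (-(K * y)) * (-(K * 1)) * (u y ^ 2 + p y ^ 2)
      + Real.exp (-(K * y)) * (2 * u y * p y + 2 * p y * (W y * u y - f y)) - (f y) ^ 2) y := by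
    intro y
    have e1 : HasDerivAt (fun y => Real.exp (-(K * y))) (Real.exp (-(K * y)) * (-(K * 1))) y :=
      (((hasDerivAt_id y).const_mul K).neg).exp
    have e2 : HasDerivAt (fun y => u y ^ 2 + p y ^ 2)
        (2 * u y * p y + 2 * p y * (W y * u y - f y)) y :=
      (((du y).pow 2).add ((dp y).pow 2)).congr_deriv (by simp)
    have e3 : HasDerivAt (fun y => ∫ t in (0 : ℝ)..y, (f t) ^ 2) ((f y) ^ 2) y :=
      intervalIntegral.integral_hasDerivAt_right (cf2.intervalIntegrable _ _)
        (cf2.stronglyMeasurableAtFilter _ _) cf2.continuousAt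
    exact (e1.mul e2).sub e3
  have anti : AntitoneOn h (Set.Ici 0) := by
    refine antitoneOn_of_deriv_nonpos (convex_Ici 0)
      (fun y _ => (dh y).continuousAt.continuousWithinAt)
      (fun y _ => (dh y).differentiableAt.differentiableWithinAt) ?_
    intro y hy
    rw [interior_Ici, Set.mem_Ioi] at hy
    rw [(dh y).deriv]
    have hE0 : 0 < Real.exp (-(K * y)) := Real.exp_pos _
    have hE1 : Real.exp (-(K * y)) ≤ 1 := by
      rw [Real.exp_le_one_iff]
      have : 0 ≤ K * y := by positivity
      linarith
    have hWu : 2 * p y * (W y * u y) ≤ M * (u y ^ 2 + p y ^ 2) := by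
      obtain ⟨h1, h2⟩ := abs_le.1 (hM y)
      nlinarith [mul_nonneg (sub_nonneg.2 h2) (sq_nonneg (u y + p y)),
        mul_nonneg (by linarith : 0 ≤ W y + M) (sq_nonneg (u y - p y))]
    have key : -(K * 1) * (u y ^ 2 + p y ^ 2) + (2 * u y * p y + 2 * p y * (W y * u y - f y))
        ≤ (f y) ^ 2 := by
      rw [hK]
      nlinarith [sq_nonneg (u y - p y), sq_nonneg (p y + f y), sq_nonneg (u y)]
    nlinarith [mul_le_mul_of_nonneg_left key hE0.le,
      mul_le_mul_of_nonneg_right hE1 (sq_nonneg (f y))]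
  have h0x : h x ≤ h 0 := anti (Set.mem_Ici.2 le_rfl) (Set.mem_Ici.2 hx) hx
  have hint : ∫ t in (0 : ℝ)..x, (f t) ^ 2 ≤ ∫ t, (f t) ^ 2 := by
    rw [intervalIntegral.integral_of_le hx]
    exact setIntegral_le_integral jf (Eventually.of_forall fun t => sq_nonneg _)
  have h1 : Real.exp (-(K * x)) * (u x ^ 2 + p x ^ 2) ≤ u 0 ^ 2 + p 0 ^ 2 + ∫ t, (f t) ^ 2 := by
    simp only [hh, mul_zero, neg_zero, Real.exp_zero, one_mul,
      intervalIntegral.integral_same, sub_zero] at h0x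
    linarith
  calc u x ^ 2 + p x ^ 2
      = Real.exp (K * x) * (Real.exp (-(K * x)) * (u x ^ 2 + p x ^ 2)) := by
        rw [← mul_assoc, ← Real.exp_add]; simp
    _ ≤ _ := mul_le_mul_of_nonneg_left h1 (Real.exp_pos _).le

/-- Energy estimate: at every point the size of `(u, u')` is controlled by the data at `0` and the
`L²` norm of the source. The left half-line follows from the right one by reflection. -/
lemma gronwall {W u p f : ℝ → ℝ} {M : ℝ} (hM : ∀ x, |W x| ≤ M)
    (du : ∀ x, HasDerivAt u (p x) x) (dp : ∀ x, HasDerivAt p (W x * u x - f x) x)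
    (cf : Continuous f) (jf : Integrable (fun x => (f x) ^ 2)) (x : ℝ) :
    u x ^ 2 + p x ^ 2 ≤ Real.exp ((M + 2) * |x|) * (u 0 ^ 2 + p 0 ^ 2 + ∫ t, (f t) ^ 2) := by
  rcases le_total 0 x with hx | hx
  · rw [abs_of_nonneg hx]
    exact gronwall_right hM du dp cf jf hx
  · have := gronwall_right (W := fun y => W (-y)) (u := fun y => u (-y)) (p := fun y => -p (-y))
      (f := fun y => f (-y)) (M := M) (fun y => hM (-y))
      (fun y => ((du (-y)).comp y (hasDerivAt_neg y)).congr_deriv (by ring))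
      (fun y => (((dp (-y)).comp y (hasDerivAt_neg y)).neg).congr_deriv (by ring))
      (cf.comp continuous_neg) jf.comp_neg (x := -x) (by linarith)
    rw [integral_neg_eq_self (fun t => (f t) ^ 2)] at this
    simpa [abs_of_nonpos hx] using this

/-! ### Coercivity up to the data at the origin -/

/-- Coercivity modulo the data at `0`. Integrating `(u u')'` over the line gives
`∫ (u'² + W u²) = ∫ u f`; outside `[-R, R]` the potential is at least `m > 0`, and inside, `u²` is
bounded by `gronwall`. -/
lemma coercive {W : ℝ → ℝ} {M m R : ℝ} (hM : ∀ x, |W x| ≤ M) (hWc : Continuous W) (hm : 0 < m)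
    (hmR : ∀ x, R < |x| → m ≤ W x) :
    ∃ A > 0, ∀ u p f, H2Sol W u p f →
      ∫ x, (u x ^ 2 + p x ^ 2) ≤ A * (u 0 ^ 2 + p 0 ^ 2 + ∫ x, (f x) ^ 2) := by
  have hM0 : 0 ≤ M := (abs_nonneg _).trans (hM 0)
  set c := min 1 (m / 2) with hc
  have hc0 : 0 < c := by positivity
  have hc1 : c ≤ 1 := min_le_left _ _
  have hc2 : c ≤ m / 2 := min_le_right _ _
  set E := Real.exp ((M + 2) * R) with hE
  set V := (volume (Set.Icc (-R) R)).toReal with hV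
  have hV0 : 0 ≤ V := ENNReal.toReal_nonneg
  have hE0 : 0 < E := Real.exp_pos _
  refine ⟨(1 / (2 * m) + (M + m) * E * V) / c, by positivity, fun u p f h => ?_⟩
  set I := ∫ x, (f x) ^ 2 with hI
  have hI0 : 0 ≤ I := integral_nonneg fun x => sq_nonneg _
  set B := u 0 ^ 2 + p 0 ^ 2 + I with hB
  have hB0 : 0 ≤ B := by positivity
  have iuf := integrable_mul_of_sq h.cu h.cf h.iu h.if2
  have iup := integrable_mul_of_sq h.cu h.cp h.iu h.ip
  have iWu : Integrable (fun x => W x * u x ^ 2) :=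
    h.iu.bdd_mul hWc.aestronglyMeasurable (c := M) (Eventually.of_forall hM)
  have ider : Integrable (fun x => p x ^ 2 + W x * u x ^ 2 - u x * f x) := (h.ip.add iWu).sub iuf
  have hzero : ∫ x, (p x ^ 2 + W x * u x ^ 2 - u x * f x) = 0 :=
    integral_eq_zero_of_hasDerivAt_of_integrable (f := fun x => u x * p x)
      (fun x => ((h.du x).mul (h.dp x)).congr_deriv (by ring)) ider iup
  set χ : ℝ → ℝ := (Set.Icc (-R) R).indicator (fun _ => (M + m) * (E * B)) with hχ
  have iχ : Integrable χ :=
    (integrable_indicator_iff measurableSet_Icc).2 (integrableOn_const (by simp))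
  have hχint : ∫ x, χ x = V * ((M + m) * (E * B)) := by
    rw [hχ, integral_indicator measurableSet_Icc, setIntegral_const, smul_eq_mul]
    rfl
  have pt : ∀ x, c * (u x ^ 2 + p x ^ 2) ≤
      (p x ^ 2 + W x * u x ^ 2 - u x * f x) + 1 / (2 * m) * (f x) ^ 2 + χ x := by
    intro x
    have hyoung : u x * f x ≤ m / 2 * u x ^ 2 + 1 / (2 * m) * (f x) ^ 2 := by
      have : m / 2 * u x ^ 2 + 1 / (2 * m) * (f x) ^ 2 - u x * f x
          = 1 / (2 * m) * (m * u x - f x) ^ 2 := by field_simp; ring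
      have h2 : 0 ≤ 1 / (2 * m) * (m * u x - f x) ^ 2 := by positivity
      linarith
    have h1 : c * (u x ^ 2 + p x ^ 2) ≤ m / 2 * u x ^ 2 + p x ^ 2 := by
      nlinarith [mul_le_mul_of_nonneg_right hc1 (sq_nonneg (p x)),
        mul_le_mul_of_nonneg_right hc2 (sq_nonneg (u x))]
    have h2 : m * u x ^ 2 ≤ W x * u x ^ 2 + χ x := by
      by_cases hx : x ∈ Set.Icc (-R) R
      · rw [hχ, Set.indicator_of_mem hx]
        have hxR : |x| ≤ R := abs_le.2 hx
        have hg := gronwall hM h.du h.dp h.cf h.if2 x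
        have hEx : Real.exp ((M + 2) * |x|) ≤ E :=
          Real.exp_le_exp.2 (mul_le_mul_of_nonneg_left hxR (by linarith))
        have hu : u x ^ 2 ≤ E * B := by
          have := mul_le_mul_of_nonneg_right hEx hB0
          nlinarith [sq_nonneg (p x)]
        have hW := (abs_le.1 (hM x)).1
        nlinarith [mul_le_mul_of_nonneg_left hu (by linarith : 0 ≤ M + m),
          mul_nonneg (by linarith : 0 ≤ W x + M) (sq_nonneg (u x))]
      · rw [hχ, Set.indicator_of_notMem hx, add_zero]
        refine mul_le_mul_of_nonneg_right (hmR x ?_) (sq_nonneg _)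
        by_contra hcon
        exact hx (abs_le.1 (not_lt.1 hcon))
    linarith
  have iup2 : Integrable (fun x => u x ^ 2 + p x ^ 2) := h.iu.add h.ip
  have isrc : Integrable (fun x => (p x ^ 2 + W x * u x ^ 2 - u x * f x) + 1 / (2 * m) * (f x) ^ 2) :=
    ider.add (h.if2.const_mul (1 / (2 * m)))
  have hle := integral_mono (iup2.const_mul c) (isrc.add iχ) pt
  have hr : ∫ x, ((p x ^ 2 + W x * u x ^ 2 - u x * f x) + 1 / (2 * m) * (f x) ^ 2 + χ x)
      = 1 / (2 * m) * I + V * ((M + m) * (E * B)) := by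
    rw [integral_add isrc iχ,
      integral_add ider (h.if2.const_mul (1 / (2 * m))), hzero, hχint, integral_const_mul]
    ring
  have hl : ∫ x, c * (u x ^ 2 + p x ^ 2) = c * ∫ x, (u x ^ 2 + p x ^ 2) := integral_const_mul _ _
  have hfin : c * ∫ x, (u x ^ 2 + p x ^ 2) ≤ 1 / (2 * m) * I + V * ((M + m) * (E * B)) := by
    rw [← hr, ← hl]; exact hle
  have hIB : 1 / (2 * m) * I ≤ 1 / (2 * m) * B :=
    mul_le_mul_of_nonneg_left (by rw [hB]; nlinarith [sq_nonneg (u 0), sq_nonneg (p 0)])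
      (by positivity)
  rw [div_mul_eq_mul_div, le_div_iff₀ hc0]
  nlinarith

/-! ### Limits of approximate kernel elements -/

/-- Fatou's lemma for squares. -/
lemma integrable_sq_of_tendsto {u : ℕ → ℝ → ℝ} {v : ℝ → ℝ} {B : ℝ} (hc : ∀ n, Continuous (u n))
    (hi : ∀ n, Integrable (fun x => (u n x) ^ 2)) (hB : ∀ n, ∫ x, (u n x) ^ 2 ≤ B)
    (hlim : ∀ x, Tendsto (fun n => u n x) atTop (nhds (v x))) :
    Integrable (fun x => (v x) ^ 2) := by
  refine integrable_of_tendsto (G := fun n x => (u n x) ^ 2)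
    (Eventually.of_forall fun x => (hlim x).pow 2)
    (fun n => ((hc n).pow 2).aestronglyMeasurable) ?_
  have hb : ∀ n, ∫⁻ x, ‖(u n x) ^ 2‖ₑ ≤ ENNReal.ofReal B := by
    intro n
    have : ∫⁻ x, ‖(u n x) ^ 2‖ₑ = ENNReal.ofReal (∫ x, (u n x) ^ 2) := by
      rw [ofReal_integral_eq_lintegral_ofReal (hi n) (Eventually.of_forall fun x => sq_nonneg _)]
      refine lintegral_congr fun x => ?_
      rw [Real.enorm_of_nonneg (sq_nonneg _)]
    rw [this]
    exact ENNReal.ofReal_le_ofReal (hB n)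
  refine ne_top_of_le_ne_top (ENNReal.ofReal_ne_top (r := B)) ?_
  exact (liminf_le_liminf (Eventually.of_forall hb)).trans_eq (liminf_const _)

/-- A primitive of an `L²` function is small at each point when its `L²` norm is: this is
`gronwall` for the zero potential, applied to a second primitive. -/
lemma primitive_sq_le {f : ℝ → ℝ} (cf : Continuous f) (jf : Integrable (fun x => (f x) ^ 2))
    (x : ℝ) : (∫ t in (0 : ℝ)..x, f t) ^ 2 ≤ Real.exp (2 * |x|) * ∫ t, (f t) ^ 2 := by
  have d1 : ∀ x, HasDerivAt (fun y => ∫ t in (0 : ℝ)..y, f t) (f x) x := fun x =>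
    intervalIntegral.integral_hasDerivAt_right (cf.intervalIntegrable _ _)
      (cf.stronglyMeasurableAtFilter _ _) cf.continuousAt
  have c1 : Continuous (fun y => ∫ t in (0 : ℝ)..y, f t) :=
    continuous_iff_continuousAt.2 fun x => (d1 x).continuousAt
  have d2 : ∀ x, HasDerivAt (fun z => ∫ y in (0 : ℝ)..z, ∫ t in (0 : ℝ)..y, f t)
      (∫ t in (0 : ℝ)..x, f t) x := fun x =>
    intervalIntegral.integral_hasDerivAt_right (c1.intervalIntegrable _ _)
      (c1.stronglyMeasurableAtFilter _ _) c1.continuousAt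
  have := gronwall (W := fun _ => 0) (M := 0) (f := fun x => -f x) (by simp) d2
    (fun x => (d1 x).congr_deriv (by ring)) cf.neg (by simpa using jf) x
  simp only [intervalIntegral.integral_same, neg_sq, zero_add, ne_eq, OfNat.ofNat_ne_zero,
    not_false_eq_true, zero_pow] at this
  nlinarith [sq_nonneg (∫ y in (0 : ℝ)..x, ∫ t in (0 : ℝ)..y, f t)]

/-- Approximate kernel elements with convergent data at `0` converge to a kernel element. -/
lemma exists_limit {W : ℝ → ℝ} {M A : ℝ} (hM : ∀ x, |W x| ≤ M) (hA0 : 0 < A)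
    (hA : ∀ u p f, H2Sol W u p f →
      ∫ x, (u x ^ 2 + p x ^ 2) ≤ A * (u 0 ^ 2 + p 0 ^ 2 + ∫ x, (f x) ^ 2))
    {u p f : ℕ → ℝ → ℝ} (h : ∀ n, H2Sol W (u n) (p n) (f n)) {a b B : ℝ}
    (ha : Tendsto (fun n => u n 0) atTop (nhds a)) (hb : Tendsto (fun n => p n 0) atTop (nhds b))
    (hf : Tendsto (fun n => ∫ x, (f n x) ^ 2) atTop (nhds 0))
    (hB : ∀ n, u n 0 ^ 2 + p n 0 ^ 2 + ∫ x, (f n x) ^ 2 ≤ B) :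
    ∃ v q, H2Sol W v q (fun _ => 0) ∧ v 0 = a ∧ q 0 = b := by
  have hM0 : 0 ≤ M := (abs_nonneg _).trans (hM 0)
  set d : ℕ → ℕ → ℝ := fun n m =>
    (u n 0 - u m 0) ^ 2 + (p n 0 - p m 0) ^ 2 + ∫ x, (f n x - f m x) ^ 2 with hd
  have hd0 : ∀ n m, 0 ≤ d n m := fun n m =>
    add_nonneg (by positivity) (integral_nonneg fun x => sq_nonneg _)
  have hdle : ∀ n m x, (u n x - u m x) ^ 2 + (p n x - p m x) ^ 2 ≤
      Real.exp ((M + 2) * |x|) * d n m := fun n m x =>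
    gronwall hM ((h n).sub (h m)).du ((h n).sub (h m)).dp ((h n).sub (h m)).cf
      ((h n).sub (h m)).if2 x
  have hdsmall : ∀ ε > 0, ∃ N, ∀ m ≥ N, ∀ n ≥ N, d m n < ε := by
    intro ε hε
    obtain ⟨N1, h1⟩ := Metric.cauchySeq_iff.1 ha.cauchySeq (min 1 (ε / 4)) (by positivity)
    obtain ⟨N2, h2⟩ := Metric.cauchySeq_iff.1 hb.cauchySeq (min 1 (ε / 4)) (by positivity)
    obtain ⟨N3, h3⟩ := eventually_atTop.1 (hf.eventually (gt_mem_nhds (by positivity : 0 < ε / 8)))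
    refine ⟨max N1 (max N2 N3), fun m hm n hn => ?_⟩
    simp only [ge_iff_le, max_le_iff] at hm hn
    have sq_small : ∀ t, |t| < min 1 (ε / 4) → t ^ 2 < ε / 4 := by
      intro t ht
      obtain ⟨ht1, ht2⟩ := lt_min_iff.1 ht
      rw [← sq_abs]
      nlinarith [abs_nonneg t]
    have e1 := sq_small _ (h1 m hm.1 n hn.1)
    have e2 := sq_small _ (h2 m hm.2.1 n hn.2.1)
    have e3 : ∫ x, (f m x - f n x) ^ 2 ≤ 2 * (∫ x, (f m x) ^ 2) + 2 * ∫ x, (f n x) ^ 2 := by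
      rw [← integral_const_mul, ← integral_const_mul,
        ← integral_add ((h m).if2.const_mul 2) ((h n).if2.const_mul 2)]
      refine integral_mono ((h m).sub (h n)).if2
        (((h m).if2.const_mul 2).add ((h n).if2.const_mul 2)) fun x => ?_
      simp only
      nlinarith [sq_nonneg (f m x + f n x)]
    have e4 := h3 m hm.2.2
    have e5 := h3 n hn.2.2
    simp only [hd]
    linarith
  have key : ∀ (g : ℕ → ℝ → ℝ), (∀ n m x, (g n x - g m x) ^ 2 ≤ Real.exp ((M + 2) * |x|) * d n m) →
      ∀ T, UniformCauchySeqOn g atTop (Set.Icc (-T) T) := by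
    intro g hg T
    rw [Metric.uniformCauchySeqOn_iff]
    intro ε hε
    obtain ⟨N, hN⟩ := hdsmall (ε ^ 2 / Real.exp ((M + 2) * T)) (by positivity)
    refine ⟨N, fun m hm n hn x hx => ?_⟩
    rw [Real.dist_eq]
    refine abs_lt_of_sq_lt_sq ?_ hε.le
    have hEx : Real.exp ((M + 2) * |x|) ≤ Real.exp ((M + 2) * T) :=
      Real.exp_le_exp.2 (mul_le_mul_of_nonneg_left (abs_le.2 hx) (by linarith))
    have h1 := hN m hm n hn
    rw [lt_div_iff₀ (Real.exp_pos _)] at h1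
    nlinarith [hg m n x, mul_le_mul_of_nonneg_right hEx (hd0 m n)]
  have ucu := key u fun n m x => by nlinarith [hdle n m x, sq_nonneg (p n x - p m x)]
  have ucp := key p fun n m x => by nlinarith [hdle n m x, sq_nonneg (u n x - u m x)]
  have lim : ∀ (g : ℕ → ℝ → ℝ), (∀ T, UniformCauchySeqOn g atTop (Set.Icc (-T) T)) →
      ∀ x, ∃ y, Tendsto (fun n => g n x) atTop (nhds y) := fun g hg x =>
    cauchySeq_tendsto_of_complete ((hg |x|).cauchySeq (abs_le.1 le_rfl))
  choose v hv using lim u ucu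
  choose q hq using lim p ucp
  have unifu : ∀ T, TendstoUniformlyOn u v atTop (Set.Icc (-T) T) := fun T =>
    (ucu T).tendstoUniformlyOn_of_tendsto fun x _ => hv x
  have unifp : ∀ T, TendstoUniformlyOn p q atTop (Set.Icc (-T) T) := fun T =>
    (ucp T).tendstoUniformlyOn_of_tendsto fun x _ => hq x
  have memT : ∀ x : ℝ, x ∈ Set.Ioo (-(|x| + 1)) (|x| + 1) := fun x => abs_lt.1 (by linarith)
  have dv : ∀ x, HasDerivAt v (q x) x := fun x =>
    hasDerivAt_of_tendstoUniformlyOn isOpen_Ioo ((unifp _).mono Set.Ioo_subset_Icc_self)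
      (Eventually.of_forall fun n y _ => (h n).du y) (fun y _ => hv y) (memT x)
  -- The sources converge only in `L²`, so `p n` is corrected by a primitive of `f n`: the result
  -- has the locally uniformly convergent derivative `W * u n` and the same limit `q`.
  have dq : ∀ x, HasDerivAt q (W x * v x) x := by
    intro x
    refine hasDerivAt_of_tendstoUniformlyOn (l := atTop) isOpen_Ioo
      (f := fun n y => p n y + ∫ t in (0 : ℝ)..y, f n t) (f' := fun n y => W y * u n y)
      (g' := fun y => W y * v y)
      ?_ (Eventually.of_forall fun n y _ => ?_) (fun y _ => ?_) (memT x)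
    · rw [Metric.tendstoUniformlyOn_iff]
      intro ε hε
      filter_upwards [Metric.tendstoUniformlyOn_iff.1 (unifu (|x| + 1)) (ε / (M + 1))
        (by positivity)] with n hn y hy
      have h1 := hn y (Set.Ioo_subset_Icc_self hy)
      rw [Real.dist_eq] at h1 ⊢
      rw [← mul_sub, abs_mul]
      rw [lt_div_iff₀ (by positivity)] at h1
      nlinarith [mul_le_mul_of_nonneg_right (hM y) (abs_nonneg (v y - u n y)),
        abs_nonneg (v y - u n y)]
    · have d1 : HasDerivAt (fun y => ∫ t in (0 : ℝ)..y, f n t) (f n y) y :=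
        intervalIntegral.integral_hasDerivAt_right ((h n).cf.intervalIntegrable _ _)
          ((h n).cf.stronglyMeasurableAtFilter _ _) (h n).cf.continuousAt
      exact (((h n).dp y).add d1).congr_deriv (by ring)
    · have h0 : Tendsto (fun n => ∫ t in (0 : ℝ)..y, f n t) atTop (nhds 0) := by
        have hsq : Tendsto (fun n => (∫ t in (0 : ℝ)..y, f n t) ^ 2) atTop (nhds 0) :=
          squeeze_zero (fun n => sq_nonneg _)
            (fun n => primitive_sq_le (h n).cf (h n).if2 y)
            (by simpa using hf.const_mul (Real.exp (2 * |y|)))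
        have := hsq.sqrt
        simp only [Real.sqrt_sq_eq_abs, Real.sqrt_zero] at this
        exact (tendsto_zero_iff_abs_tendsto_zero _).2 this
      simpa using (hq y).add h0
  have hbd : ∀ n, (∫ x, (u n x) ^ 2) + ∫ x, (p n x) ^ 2 ≤ A * B := fun n => by
    rw [← integral_add (h n).iu (h n).ip]
    exact (hA _ _ _ (h n)).trans (mul_le_mul_of_nonneg_left (hB n) hA0.le)
  have nn : ∀ g : ℝ → ℝ, 0 ≤ ∫ x, (g x) ^ 2 := fun g => integral_nonneg fun x => sq_nonneg _
  refine ⟨v, q, ⟨dv, fun x => by simpa using dq x, continuous_const, ?_, ?_, by simp⟩,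
    tendsto_nhds_unique (hv 0) ha, tendsto_nhds_unique (hq 0) hb⟩
  · exact integrable_sq_of_tendsto (B := A * B) (fun n => (h n).cu) (fun n => (h n).iu)
      (fun n => by linarith [hbd n, nn (p n)]) hv
  · exact integrable_sq_of_tendsto (B := A * B) (fun n => (h n).cp) (fun n => (h n).ip)
      (fun n => by linarith [hbd n, nn (u n)]) hq

/-! ### The orthogonal complement of the kernel -/

/-- For `u` orthogonal to the kernel, the data of `u` at `0` are controlled by `L u`. Otherwise a
normalized sequence with `L uₙ → 0` would converge in `L²` to a kernel element `v` with nonzero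
data, whereas orthogonality gives `‖v‖ ≤ ‖uₙ - v‖ → 0`. -/
lemma data_le {W : ℝ → ℝ} {M A : ℝ} (hM : ∀ x, |W x| ≤ M) (hA0 : 0 < A)
    (hA : ∀ u p f, H2Sol W u p f →
      ∫ x, (u x ^ 2 + p x ^ 2) ≤ A * (u 0 ^ 2 + p 0 ^ 2 + ∫ x, (f x) ^ 2)) :
    ∃ D > 0, ∀ u p f, H2Sol W u p f →
      (∀ v q, H2Sol W v q (fun _ => 0) → ∫ x, u x * v x = 0) →
      u 0 ^ 2 + p 0 ^ 2 ≤ D * ∫ x, (f x) ^ 2 := by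
  by_contra! hcon
  have hseq : ∀ n : ℕ, ∃ u p f, H2Sol W u p f ∧
      (∀ v q, H2Sol W v q (fun _ => 0) → ∫ x, u x * v x = 0) ∧
      u 0 ^ 2 + p 0 ^ 2 = 1 ∧ ∫ x, (f x) ^ 2 ≤ 1 / ((n : ℝ) + 1) := by
    intro n
    obtain ⟨u, p, f, hs, ho, hlt⟩ := hcon ((n : ℝ) + 1) (by positivity)
    have hI0 : 0 ≤ ∫ x, (f x) ^ 2 := integral_nonneg fun x => sq_nonneg _
    set e := u 0 ^ 2 + p 0 ^ 2 with he
    have he0 : 0 < e := lt_of_le_of_lt (by positivity) hlt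
    have hc : (1 / Real.sqrt e) ^ 2 = 1 / e := by rw [div_pow, Real.sq_sqrt he0.le, one_pow]
    refine ⟨_, _, _, hs.smul (1 / Real.sqrt e), fun v q hv => ?_, ?_, ?_⟩
    · simp only [mul_assoc]
      rw [integral_const_mul, ho v q hv, mul_zero]
    · rw [mul_pow, mul_pow, ← mul_add, hc, ← he]
      field_simp
    · simp only [mul_pow]
      rw [integral_const_mul, hc, div_mul_eq_mul_div, one_mul,
        div_le_div_iff₀ he0 (by positivity)]
      linarith
  choose u p f hs ho he hf using hseq
  have hmem : ∀ n, (u n 0, p n 0) ∈ Set.Icc (-1 : ℝ) 1 ×ˢ Set.Icc (-1 : ℝ) 1 := fun n =>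
    ⟨abs_le.1 (abs_le_of_sq_le_sq (by nlinarith [he n, sq_nonneg (p n 0)]) zero_le_one),
      abs_le.1 (abs_le_of_sq_le_sq (by nlinarith [he n, sq_nonneg (u n 0)]) zero_le_one)⟩
  obtain ⟨⟨a, b⟩, -, φ, hφ, hlim⟩ :=
    (isCompact_Icc.prod isCompact_Icc).tendsto_subseq hmem
  have ha : Tendsto (fun n => u (φ n) 0) atTop (nhds a) :=
    (continuous_fst.tendsto _).comp hlim
  have hb : Tendsto (fun n => p (φ n) 0) atTop (nhds b) :=
    (continuous_snd.tendsto _).comp hlim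
  have hf0 : Tendsto (fun n => ∫ x, (f (φ n) x) ^ 2) atTop (nhds 0) :=
    (squeeze_zero (fun n => integral_nonneg fun x => sq_nonneg _) hf
      tendsto_one_div_add_atTop_nhds_zero_nat).comp hφ.tendsto_atTop
  have hf1 : ∀ n, ∫ x, (f n x) ^ 2 ≤ 1 := fun n =>
    (hf n).trans (by rw [div_le_one (by positivity)]; linarith [n.cast_nonneg (α := ℝ)])
  obtain ⟨v, q, hv, rfl, rfl⟩ := exists_limit hM hA0 hA (fun n => hs (φ n)) ha hb hf0 (B := 2)
    (fun n => by linarith [he (φ n), hf1 (φ n)])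
  have hone : v 0 ^ 2 + q 0 ^ 2 = 1 :=
    tendsto_nhds_unique ((ha.pow 2).add (hb.pow 2)) (by simp [he])
  have hvle : ∀ n, ∫ x, (v x) ^ 2 ≤ A * ((u (φ n) 0 - v 0) ^ 2 + (p (φ n) 0 - q 0) ^ 2
      + ∫ x, (f (φ n) x) ^ 2) := by
    intro n
    have hd := (hs (φ n)).sub hv
    have h1 := hA _ _ _ hd
    simp only [sub_zero] at h1
    rw [integral_add hd.iu hd.ip] at h1
    have h2 : 0 ≤ ∫ x, (p (φ n) x - q x) ^ 2 := integral_nonneg fun x => sq_nonneg _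
    have h3 : ∫ x, (u (φ n) x - v x) ^ 2 = (∫ x, (u (φ n) x) ^ 2) + ∫ x, (v x) ^ 2 := by
      have huv := integrable_mul_of_sq (hs (φ n)).cu hv.cu (hs (φ n)).iu hv.iu
      have : ∀ x, (u (φ n) x - v x) ^ 2
          = (u (φ n) x) ^ 2 + (v x) ^ 2 - 2 * (u (φ n) x * v x) := fun x => by ring
      simp_rw [this]
      have hsum : Integrable (fun x => (u (φ n) x) ^ 2 + (v x) ^ 2) := (hs (φ n)).iu.add hv.iu
      rw [integral_sub hsum (huv.const_mul 2),
        integral_add (hs (φ n)).iu hv.iu, integral_const_mul, ho (φ n) v q hv]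
      ring
    have h4 : 0 ≤ ∫ x, (u (φ n) x) ^ 2 := integral_nonneg fun x => sq_nonneg _
    linarith
  have hv0 : ∫ x, (v x) ^ 2 ≤ 0 := by
    refine ge_of_tendsto' (x := atTop) ?_ hvle
    have := ((((ha.sub_const (v 0)).pow 2).add ((hb.sub_const (q 0)).pow 2)).add hf0).const_mul A
    simpa using this
  have hvz : (fun x => (v x) ^ 2) = fun _ => 0 := by
    refine ((hv.cu.pow 2).ae_eq_iff_eq volume continuous_const).1 ?_
    exact (integral_eq_zero_iff_of_nonneg (fun x => sq_nonneg _) hv.iu).1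
      (le_antisymm hv0 (integral_nonneg fun x => sq_nonneg _))
  have hvx : v = fun _ => 0 := funext fun x => by simpa using congrFun hvz x
  have hq0 : q 0 = 0 := by
    have := hv.du 0
    rw [hvx] at this
    exact this.unique (hasDerivAt_const _ _)
  simp [hq0, hvx] at hone



/-! ### The lower bound in `H²` -/

/-- A Schrödinger operator L = −d²/dξ² + W with C² potential W having positive limits
at ±∞ and W'' → 0 at ±∞ is bounded away from zero (in H² norm) on the orthogonal
complement of its kernel. -/
theorem schrodinger_bounded_below_on_ker_perp
    (W : ℝ → ℝ) (Wp Wm : ℝ)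
    (hW : ContDiff ℝ 2 W)
    (htop : Tendsto W atTop (nhds Wp)) (hbot : Tendsto W atBot (nhds Wm))
    (hWp : 0 < Wp) (hWm : 0 < Wm)
    (hW''top : Tendsto (deriv (deriv W)) atTop (nhds 0))
    (hW''bot : Tendsto (deriv (deriv W)) atBot (nhds 0)) :
    ∃ C > 0, ∀ u : ℝ → ℝ, ContDiff ℝ 2 u →
      Integrable (fun ξ => (u ξ) ^ 2) →
      Integrable (fun ξ => (deriv u ξ) ^ 2) →
      Integrable (fun ξ => (deriv (deriv u) ξ) ^ 2) →
      (∀ v : ℝ → ℝ, ContDiff ℝ 2 v →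
        Integrable (fun ξ => (v ξ) ^ 2) →
        Integrable (fun ξ => (deriv (deriv v) ξ) ^ 2) →
        (∀ ξ, -deriv (deriv v) ξ + W ξ * v ξ = 0) →
        ∫ ξ : ℝ, u ξ * v ξ = 0) →
      C ^ 2 * ∫ ξ : ℝ, ((u ξ) ^ 2 + (deriv u ξ) ^ 2 + (deriv (deriv u) ξ) ^ 2) ≤
        ∫ ξ : ℝ, (-deriv (deriv u) ξ + W ξ * u ξ) ^ 2 := by
  have hWc : Continuous W := hW.continuous
  set m := min Wp Wm / 2 with hm
  have hm0 : 0 < m := by positivity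
  have hmp : m < Wp := by linarith [min_le_left Wp Wm, lt_min hWp hWm]
  have hmm : m < Wm := by linarith [min_le_right Wp Wm, lt_min hWp hWm]
  obtain ⟨R1, hR1⟩ := eventually_atTop.1 (htop.eventually (Ioo_mem_nhds hmp (lt_add_one Wp)))
  obtain ⟨R2, hR2⟩ := eventually_atBot.1 (hbot.eventually (Ioo_mem_nhds hmm (lt_add_one Wm)))
  set R := max |R1| |R2| with hR
  have hfar : ∀ x, R < |x| → m ≤ W x ∧ W x ≤ Wp + Wm + 1 := by
    intro x hx
    have h1 : |R1| < |x| := (le_max_left _ _).trans_lt hx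
    have h2 : |R2| < |x| := (le_max_right _ _).trans_lt hx
    rcases le_total 0 x with h | h
    · rw [abs_of_nonneg h] at h1
      have := hR1 x ((le_abs_self R1).trans h1.le)
      exact ⟨this.1.le, by linarith [this.2]⟩
    · rw [abs_of_nonpos h] at h2
      have := hR2 x (by linarith [neg_abs_le R2])
      exact ⟨this.1.le, by linarith [this.2]⟩
  obtain ⟨M0, hM0⟩ := (isCompact_Icc (a := -R) (b := R)).exists_bound_of_continuousOn
    hWc.continuousOn
  set M := max M0 (Wp + Wm + 1) with hMdef
  have hM : ∀ x, |W x| ≤ M := by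
    intro x
    by_cases hx : R < |x|
    · obtain ⟨h1, h2⟩ := hfar x hx
      rw [abs_of_nonneg (by linarith)]
      exact h2.trans (le_max_right _ _)
    · exact (hM0 x (abs_le.1 (not_lt.1 hx))).trans (le_max_left _ _)
  obtain ⟨A, hA0, hA⟩ := coercive hM hWc hm0 fun x hx => (hfar x hx).1
  obtain ⟨D, hD0, hD⟩ := data_le hM hA0 hA
  set Q := (2 * M ^ 2 + 1) * (A * (D + 1)) + 2 with hQ
  have hQ0 : 0 < Q := by positivity
  refine ⟨Real.sqrt (1 / Q), by positivity, fun u hu iu ip ipp horth => ?_⟩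
  have hu1 : ContDiff ℝ 1 (deriv u) := by
    have : ContDiff ℝ (1 + 1) u := by simpa [one_add_one_eq_two] using hu
    exact (contDiff_succ_iff_deriv.1 this).2.2
  have cdd : Continuous (deriv (deriv u)) := hu1.continuous_deriv le_rfl
  have hsol : H2Sol W u (deriv u) (fun x => -deriv (deriv u) x + W x * u x) :=
    { du := fun x => (hu.differentiable (by norm_num) x).hasDerivAt
      dp := fun x => ((hu1.differentiable (by norm_num) x).hasDerivAt).congr_deriv (by ring)
      cf := cdd.neg.add (hWc.mul hu.continuous)
      iu := iu
      ip := ip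
      if2 := by
        have hWu : Integrable (fun x => (W x * u x) ^ 2) := by
          simp only [mul_pow]
          refine iu.bdd_mul (hWc.pow 2).aestronglyMeasurable (c := M ^ 2)
            (Eventually.of_forall fun x => ?_)
          rw [norm_pow]
          exact pow_le_pow_left₀ (norm_nonneg _) (hM x) 2
        refine (integrable_sub_sq (hWc.mul hu.continuous) cdd hWu ipp).congr
          (Eventually.of_forall fun x => ?_)
        simp only [Pi.mul_apply]
        ring }
  have hdata := hD _ _ _ hsol fun v q hv => by
    have hdv : deriv v = q := funext fun x => (hv.du x).deriv
    have hddv : deriv (deriv v) = fun x => W x * v x := by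
      rw [hdv]
      exact funext fun x => by simpa using (hv.dp x).deriv
    refine horth v ?_ hv.iu ?_ fun x => by rw [hddv]; ring
    · have h1 : ContDiff ℝ 1 (deriv v) := by
        refine contDiff_one_iff_deriv.2 ⟨fun x => ?_, ?_⟩
        · rw [hdv]; exact (hv.dp x).differentiableAt
        · rw [hddv]; exact hWc.mul hv.cu
      have : ContDiff ℝ (1 + 1) v :=
        contDiff_succ_iff_deriv.2 ⟨fun x => (hv.du x).differentiableAt, by simp, h1⟩
      simpa [one_add_one_eq_two] using this
    · rw [hddv]
      simp only [mul_pow]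
      refine hv.iu.bdd_mul (hWc.pow 2).aestronglyMeasurable (c := M ^ 2)
        (Eventually.of_forall fun x => ?_)
      rw [norm_pow]
      exact pow_le_pow_left₀ (norm_nonneg _) (hM x) 2
  have hco := hA _ _ _ hsol
  have iup : Integrable (fun x => u x ^ 2 + deriv u x ^ 2) := iu.add ip
  set I := ∫ x, (-deriv (deriv u) x + W x * u x) ^ 2 with hI
  set J := ∫ x, (u x ^ 2 + deriv u x ^ 2) with hJ
  have hJle : J ≤ A * (D + 1) * I := by
    refine hco.trans ?_
    rw [mul_assoc]
    exact mul_le_mul_of_nonneg_left (by linarith) hA0.le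
  have hmain : ∫ x, (u x ^ 2 + deriv u x ^ 2 + deriv (deriv u) x ^ 2) ≤
      (2 * M ^ 2 + 1) * J + 2 * I := by
    rw [hI, hJ, ← integral_const_mul, ← integral_const_mul,
      ← integral_add (iup.const_mul _) (hsol.if2.const_mul 2)]
    refine integral_mono (iup.add ipp)
      ((iup.const_mul (2 * M ^ 2 + 1)).add (hsol.if2.const_mul 2)) fun x => ?_
    have hW2 : W x ^ 2 ≤ M ^ 2 := sq_le_sq' (abs_le.1 (hM x)).1 (abs_le.1 (hM x)).2
    simp only
    nlinarith [mul_le_mul_of_nonneg_right hW2 (sq_nonneg (u x)),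
      sq_nonneg (-deriv (deriv u) x + W x * u x + W x * u x),
      mul_nonneg (sq_nonneg M) (sq_nonneg (deriv u x))]
  rw [Real.sq_sqrt (by positivity), one_div, inv_mul_le_iff₀ hQ0, hQ]
  have := mul_le_mul_of_nonneg_left hJle (by positivity : 0 ≤ 2 * M ^ 2 + 1)
  linarith
end

section
/- For every continuously differentiable function φ : ℝ → ℝ with φ, φ' ∈ L²(ℝ), one has ∫_ℝ ((φ')² + (1 − 2 sech²ξ) φ²) dξ ≥ 0. Consequently, for any K₂ ≥ 0, ∫_ℝ ((φ')² + (1 − 2 sech²ξ + K₂) φ²) dξ ≥ K₂ ∫_ℝ φ² dξ. -/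
open MeasureTheory Filter

/-!
The operator factorises as `L = A* A` with `A = d/dξ + tanh ξ`. On the level of forms, with
`t = tanh ξ` and `t' = sech² ξ = 1 - t²`,
`(φ')² + (1 - 2 sech² ξ) φ² = (φ' + t φ)² - (t φ²)'`.
Both `t φ²` and its derivative are integrable, so the integral of the exact derivative vanishes and
the form is the integral of a square. The bound with `K₂` follows by adding `K₂ ∫ φ²`.
-/

/-- The derivative of the boundary term `tanh ξ · φ²`, written as the square
`(φ' + tanh ξ · φ)²` minus the form density. -/
lemma hasDerivAt_boundaryTerm (φ : ℝ → ℝ) (hφ : ContDiff ℝ 1 φ) (x : ℝ) :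
    HasDerivAt (fun ξ => Real.sinh ξ / Real.cosh ξ * (φ ξ) ^ 2)
      ((deriv φ x + Real.sinh x / Real.cosh x * φ x) ^ 2 -
        ((deriv φ x) ^ 2 + (1 - 2 * (1 / Real.cosh x) ^ 2) * (φ x) ^ 2)) x := by
  have hc : Real.cosh x ≠ 0 := (Real.cosh_pos x).ne'
  have hd : HasDerivAt φ (deriv φ x) x :=
    (hφ.differentiable one_ne_zero x).hasDerivAt
  refine (((Real.hasDerivAt_sinh x).div (Real.hasDerivAt_cosh x) hc).mul
    (hd.pow 2)).congr_deriv ?_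
  have hs : Real.sinh x ^ 2 = Real.cosh x ^ 2 - 1 := by
    rw [Real.cosh_sq]; ring
  simp only [Pi.div_apply, Pi.pow_apply]
  field_simp
  norm_num
  linear_combination (-φ x ^ 2) * hs

lemma abs_sinh_div_cosh_le_one (x : ℝ) : ‖Real.sinh x / Real.cosh x‖ ≤ 1 := by
  rw [Real.norm_eq_abs, abs_div, abs_of_pos (Real.cosh_pos x), div_le_one (Real.cosh_pos x)]
  refine abs_le_of_sq_le_sq ?_ (Real.cosh_pos x).le
  rw [Real.cosh_sq]; linarith

lemma continuous_sinh_div_cosh : Continuous fun x : ℝ => Real.sinh x / Real.cosh x :=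
  Real.continuous_sinh.div Real.continuous_cosh fun x => (Real.cosh_pos x).ne'

lemma integrable_formDensity (φ : ℝ → ℝ)
    (h1 : Integrable (fun ξ => (φ ξ) ^ 2))
    (h2 : Integrable (fun ξ => (deriv φ ξ) ^ 2)) :
    Integrable fun ξ : ℝ =>
      (deriv φ ξ) ^ 2 + (1 - 2 * (1 / Real.cosh ξ) ^ 2) * (φ ξ) ^ 2 := by
  refine h2.add (h1.bdd_mul (c := 1) ?_ ?_)
  · refine Continuous.aestronglyMeasurable ?_
    have : Continuous fun x : ℝ => 1 / Real.cosh x :=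
      continuous_const.div Real.continuous_cosh fun x => (Real.cosh_pos x).ne'
    fun_prop
  · refine Eventually.of_forall fun x => ?_
    have h : (1 / Real.cosh x) ≤ 1 := by
      rw [div_le_one (Real.cosh_pos x)]; exact Real.one_le_cosh x
    have h0 : 0 ≤ 1 / Real.cosh x := (one_div_pos.mpr (Real.cosh_pos x)).le
    rw [Real.norm_eq_abs, abs_le]
    constructor <;> nlinarith

/-- Nonnegativity of the quadratic form of L = −d²/dξ² + (1 − 2 sech²ξ), and the
resulting lower bound for L + K₂. -/
theorem quadratic_form_L_nonneg
    (φ : ℝ → ℝ) (hφ : ContDiff ℝ 1 φ)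
    (h1 : Integrable (fun ξ => (φ ξ) ^ 2))
    (h2 : Integrable (fun ξ => (deriv φ ξ) ^ 2)) :
    (0 ≤ ∫ ξ : ℝ, ((deriv φ ξ) ^ 2 + (1 - 2 * (1 / Real.cosh ξ) ^ 2) * (φ ξ) ^ 2)) ∧
    ∀ K₂ : ℝ, 0 ≤ K₂ →
      K₂ * ∫ ξ : ℝ, (φ ξ) ^ 2 ≤
        ∫ ξ : ℝ, ((deriv φ ξ) ^ 2 + (1 - 2 * (1 / Real.cosh ξ) ^ 2 + K₂) * (φ ξ) ^ 2) := by
  have hF := integrable_formDensity φ h1 h2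
  have hcφ : Continuous φ := hφ.continuous
  have hcd : Continuous (deriv φ) := hφ.continuous_deriv le_rfl
  have hct := continuous_sinh_div_cosh
  have hG : Integrable fun ξ : ℝ => Real.sinh ξ / Real.cosh ξ * (φ ξ) ^ 2 :=
    h1.bdd_mul hct.aestronglyMeasurable (Eventually.of_forall abs_sinh_div_cosh_le_one)
  have hS : Integrable fun ξ : ℝ =>
      (deriv φ ξ + Real.sinh ξ / Real.cosh ξ * φ ξ) ^ 2 := by
    -- (a + t b)² ≤ 2 a² + 2 b² when |t| ≤ 1
    refine ((h2.const_mul 2).add (h1.const_mul 2)).mono'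
      (Continuous.aestronglyMeasurable (by fun_prop)) (Eventually.of_forall fun x => ?_)
    have ht := abs_sinh_div_cosh_le_one x
    rw [Real.norm_eq_abs, abs_of_nonneg (sq_nonneg _)]
    have ht2 : (Real.sinh x / Real.cosh x) ^ 2 ≤ 1 := (sq_le_one_iff_abs_le_one _).mpr ht
    simp only [Pi.add_apply]
    nlinarith [sq_nonneg (deriv φ x - Real.sinh x / Real.cosh x * φ x),
      mul_le_mul_of_nonneg_right ht2 (sq_nonneg (φ x))]
  have h0 := integral_eq_zero_of_hasDerivAt_of_integrable
    (hasDerivAt_boundaryTerm φ hφ) (hS.sub hF) hG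
  rw [integral_sub hS hF] at h0
  have hnonneg : 0 ≤ ∫ ξ : ℝ,
      ((deriv φ ξ) ^ 2 + (1 - 2 * (1 / Real.cosh ξ) ^ 2) * (φ ξ) ^ 2) := by
    rw [← sub_eq_zero.mp h0]
    exact integral_nonneg fun x => sq_nonneg _
  refine ⟨hnonneg, fun K₂ _ => ?_⟩
  have hsplit : ∫ ξ : ℝ, ((deriv φ ξ) ^ 2 +
        (1 - 2 * (1 / Real.cosh ξ) ^ 2 + K₂) * (φ ξ) ^ 2) =
      (∫ ξ : ℝ, ((deriv φ ξ) ^ 2 + (1 - 2 * (1 / Real.cosh ξ) ^ 2) * (φ ξ) ^ 2)) +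
        K₂ * ∫ ξ : ℝ, (φ ξ) ^ 2 := by
    rw [← integral_const_mul, ← integral_add hF (h1.const_mul K₂)]
    congr 1
    ext x
    ring
  rw [hsplit]
  linarith
end

section
/- Let 0 < H₃ < 1 and let β_T : ℝ → ℝ be the strictly decreasing solution of β_T' = H₃ − sin β_T with lim_{ξ→−∞} β_T = π − arcsin H₃ and lim_{ξ→+∞} β_T = arcsin H₃. Then for every continuously differentiable function φ : ℝ → ℝ with φ, φ' ∈ L²(ℝ), one has ∫_ℝ ((φ')² + (cos 2β_T(ξ) + 3 H₃ sin β_T(ξ) − H₃²) φ²) dξ ≥ H₃² ∫_ℝ φ² dξ. -/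
open MeasureTheory Filter Real

/-!
The function `u = βT'` is a zero-energy ground state of a slightly smaller operator: differentiating
the equation `u = H₃ - sin βT` gives `u' = -cos βT * u` and `u'' = (1 - 2 sin² βT + H₃ sin βT) * u`.
Hence, with `w = u' / u = -cos βT` (so that `w' = (H₃ - sin βT) * sin βT`), the quadratic form of
`N - H₃²` has density
`(φ' - w φ)² + (w φ²)' + 2 H₃ (sin βT - H₃) φ²`.
The total derivative integrates to zero because `w φ²` and its derivative are integrable, and the
last term is nonnegative because `βT` is decreasing, that is, `sin βT ≥ H₃`.
-/

/-- Lower bound for the quadratic form of the Schrödinger operator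
N = −d²/dξ² + cos 2β_T + 3H₃ sin β_T − H₃² arising in the transverse-field case. -/
theorem quadratic_form_N_bound
    (H₃ : ℝ) (hH₃ : 0 < H₃) (hH₃' : H₃ < 1)
    (βT : ℝ → ℝ) (hβT : ContDiff ℝ 1 βT)
    (hode : ∀ ξ, deriv βT ξ = H₃ - Real.sin (βT ξ))
    (hanti : StrictAnti βT)
    (hbot : Tendsto βT atBot (nhds (π - Real.arcsin H₃)))
    (htop : Tendsto βT atTop (nhds (Real.arcsin H₃)))
    (φ : ℝ → ℝ) (hφ : ContDiff ℝ 1 φ)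
    (h1 : Integrable (fun ξ => (φ ξ) ^ 2))
    (h2 : Integrable (fun ξ => (deriv φ ξ) ^ 2)) :
    H₃ ^ 2 * ∫ ξ : ℝ, (φ ξ) ^ 2 ≤
      ∫ ξ : ℝ, ((deriv φ ξ) ^ 2 +
        (Real.cos (2 * βT ξ) + 3 * H₃ * Real.sin (βT ξ) - H₃ ^ 2) * (φ ξ) ^ 2) := by
  have hβd : ∀ ξ, HasDerivAt βT (H₃ - Real.sin (βT ξ)) ξ := fun ξ => by
    rw [← hode]
    exact (hβT.differentiable one_ne_zero ξ).hasDerivAt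
  have hφd : ∀ ξ, HasDerivAt φ (deriv φ ξ) ξ := fun ξ =>
    (hφ.differentiable one_ne_zero ξ).hasDerivAt
  have hs : ∀ ξ, H₃ ≤ Real.sin (βT ξ) := fun ξ => by
    have := hanti.antitone.deriv_nonpos (x := ξ)
    rw [hode] at this
    linarith
  have hβc : Continuous βT := hβT.continuous
  have hφc : Continuous φ := hφ.continuous
  have hφ'c : Continuous (deriv φ) := hφ.continuous_deriv le_rfl
  have hbdd : ∀ (g : ℝ → ℝ) (C : ℝ), Continuous g → (∀ ξ, |g ξ| ≤ C) →
      Integrable (fun ξ => g ξ * (φ ξ) ^ 2) := fun g C hg hC =>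
    h1.bdd_mul hg.aestronglyMeasurable (Eventually.of_forall hC)
  have hcross : Integrable (fun ξ => 2 * -Real.cos (βT ξ) * (φ ξ * deriv φ ξ)) := by
    refine (h1.add h2).mono' (by fun_prop) (Eventually.of_forall fun ξ => ?_)
    have hc := Real.abs_cos_le_one (βT ξ)
    simp only [Pi.add_apply, Real.norm_eq_abs, abs_mul, abs_neg, abs_two]
    rw [← sq_abs (φ ξ), ← sq_abs (deriv φ ξ)]
    have hp := mul_nonneg (abs_nonneg (φ ξ)) (abs_nonneg (deriv φ ξ))
    nlinarith [sq_nonneg (|φ ξ| - |deriv φ ξ|), mul_le_mul_of_nonneg_right hc hp]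
  have hF : Integrable (fun ξ => -Real.cos (βT ξ) * (φ ξ) ^ 2) :=
    hbdd _ 1 (by fun_prop) fun ξ => by rw [abs_neg]; exact Real.abs_cos_le_one _
  have hF' : Integrable (fun ξ => Real.sin (βT ξ) * (H₃ - Real.sin (βT ξ)) * (φ ξ) ^ 2
      + 2 * -Real.cos (βT ξ) * (φ ξ * deriv φ ξ)) := by
    refine (hbdd _ 1 (by fun_prop) fun ξ => ?_).add hcross
    have := hs ξ
    have := Real.sin_le_one (βT ξ)
    rw [abs_le]
    constructor <;> nlinarith
  have hFd : ∀ ξ, HasDerivAt (fun ξ => -Real.cos (βT ξ) * (φ ξ) ^ 2)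
      (Real.sin (βT ξ) * (H₃ - Real.sin (βT ξ)) * (φ ξ) ^ 2
        + 2 * -Real.cos (βT ξ) * (φ ξ * deriv φ ξ)) ξ := fun ξ => by
    refine (((hβd ξ).cos.neg).mul ((hφd ξ).pow 2)).congr_deriv ?_
    simp only [Pi.neg_apply, Pi.pow_apply]
    ring
  have hV : Integrable (fun ξ =>
      (Real.cos (2 * βT ξ) + 3 * H₃ * Real.sin (βT ξ) - H₃ ^ 2) * (φ ξ) ^ 2) := by
    refine hbdd _ 5 (by fun_prop) fun ξ => ?_
    have := hs ξ
    have := Real.sin_le_one (βT ξ)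
    have := Real.cos_le_one (2 * βT ξ)
    have := Real.neg_one_le_cos (2 * βT ξ)
    rw [abs_le]
    constructor <;> nlinarith
  have hzero := integral_eq_zero_of_hasDerivAt_of_integrable hFd hF' hF
  calc H₃ ^ 2 * ∫ ξ : ℝ, (φ ξ) ^ 2
      = ∫ ξ : ℝ, (H₃ ^ 2 * (φ ξ) ^ 2 + (Real.sin (βT ξ) * (H₃ - Real.sin (βT ξ)) * (φ ξ) ^ 2
          + 2 * -Real.cos (βT ξ) * (φ ξ * deriv φ ξ))) := by
        rw [integral_add (h1.const_mul _) hF', hzero, integral_const_mul, add_zero]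
    _ ≤ _ := by
        refine integral_mono ((h1.const_mul _).add hF') (h2.add hV) fun ξ => ?_
        -- the difference of the two sides is a square plus `2 H₃ (sin βT - H₃) φ²`
        have key : 0 ≤ (deriv φ ξ + Real.cos (βT ξ) * φ ξ) ^ 2
            + 2 * H₃ * (Real.sin (βT ξ) - H₃) * (φ ξ) ^ 2 := by
          have := sub_nonneg.2 (hs ξ)
          positivity
        simp only [Real.cos_two_mul]
        linear_combination key - (φ ξ) ^ 2 * (Real.sin_sq_add_cos_sq (βT ξ))
end

section
/- Let f : ℝ → ℝ be a C² function with f, f'' ∈ L²(ℝ) satisfying −f'' + (1 − 2 sech²ξ) f = 0 on ℝ. Then there exists a constant c ∈ ℝ such that f(ξ) = c · sech ξ for all ξ. -/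
/-!
Reduction of order against the known solution `sech`. The Wronskian-type quantity
`W = (f' cosh + f sinh) / cosh² = (f cosh)' / cosh²` has zero derivative whenever `L f = 0`, so
`(f cosh)' = k cosh²` for a constant `k`, and integrating gives
`f cosh = c + k (ξ + sinh ξ cosh ξ) / 2` (`general_solution`).

The second solution is not square integrable. The odd part satisfies
`f ξ - f (-ξ) = k (sinh ξ + ξ / cosh ξ)`, whose square is at least `k²` for `ξ > 1`, while
`(f ξ - f (-ξ))² ≤ 2 f(ξ)² + 2 f(-ξ)²` is integrable. Hence `k = 0`.
-/

open MeasureTheory Filter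

/-- Every classical solution of `L f = 0` is a combination of `sech` and the odd second solution
`sinh ξ + ξ sech ξ` (here multiplied through by `cosh`). -/
lemma general_solution (f : ℝ → ℝ) (hf : ContDiff ℝ 2 f)
    (hker : ∀ ξ, -deriv (deriv f) ξ + (1 - 2 * (1 / Real.cosh ξ) ^ 2) * f ξ = 0) :
    ∃ k c : ℝ, ∀ x, f x * Real.cosh x = c + k * (x + Real.sinh x * Real.cosh x) / 2 := by
  have hd : ∀ x, HasDerivAt f (deriv f x) x := fun x =>
    ((hf.differentiable (by norm_num)) x).hasDerivAt
  have hf' : ContDiff ℝ 1 (deriv f) := by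
    have h : ContDiff ℝ (1 + 1) f := by simpa [one_add_one_eq_two] using hf
    exact (contDiff_succ_iff_deriv.1 h).2.2
  have hdd : ∀ x, HasDerivAt (deriv f) (deriv (deriv f) x) x := fun x =>
    ((hf'.differentiable (by norm_num)) x).hasDerivAt
  have hW : ∀ x, HasDerivAt
      (fun x => (deriv f x * Real.cosh x + f x * Real.sinh x) / Real.cosh x ^ 2) 0 x := by
    intro x
    have hc : Real.cosh x ≠ 0 := (Real.cosh_pos x).ne'
    have hnum := ((hdd x).mul (Real.hasDerivAt_cosh x)).add
      ((hd x).mul (Real.hasDerivAt_sinh x))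
    have h := hnum.div ((Real.hasDerivAt_cosh x).pow 2) (pow_ne_zero 2 hc)
    refine h.congr_deriv ?_
    have e : deriv (deriv f) x = (1 - 2 * (1 / Real.cosh x) ^ 2) * f x := by
      linarith [hker x]
    simp only [Pi.add_apply, Pi.mul_apply, Pi.pow_apply]
    rw [e]
    have hs := Real.cosh_sq x
    field_simp
    have hs' : Real.sinh x ^ 2 = Real.cosh x ^ 2 - 1 := by linarith
    ring_nf
    simp only [hs']
    ring
  have hWc := fun x => is_const_of_deriv_eq_zero (fun x => (hW x).differentiableAt)
    (fun x => (hW x).deriv) x 0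
  refine ⟨(deriv f 0 * Real.cosh 0 + f 0 * Real.sinh 0) / Real.cosh 0 ^ 2, f 0, ?_⟩
  set k := (deriv f 0 * Real.cosh 0 + f 0 * Real.sinh 0) / Real.cosh 0 ^ 2 with hk
  have hG : ∀ x, HasDerivAt
      (fun x => f x * Real.cosh x - k * (x + Real.sinh x * Real.cosh x) / 2) 0 x := by
    intro x
    have hc : Real.cosh x ≠ 0 := (Real.cosh_pos x).ne'
    have h := ((hd x).mul (Real.hasDerivAt_cosh x)).sub ((((hasDerivAt_id x).add
      ((Real.hasDerivAt_sinh x).mul (Real.hasDerivAt_cosh x))).const_mul k).div_const 2)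
    refine h.congr_deriv ?_
    have e : deriv f x * Real.cosh x + f x * Real.sinh x = k * Real.cosh x ^ 2 := by
      rw [← div_eq_iff (pow_ne_zero 2 hc)]
      exact hWc x
    have hs := Real.cosh_sq x
    linear_combination e + k / 2 * hs
  intro x
  have h := is_const_of_deriv_eq_zero (fun x => (hG x).differentiableAt)
    (fun x => (hG x).deriv) x 0
  simp at h
  linarith

/-- The kernel of the Schrödinger operator L = −d²/dξ² + (1 − 2 sech²ξ) in H²(ℝ)
is spanned by sech ξ. -/
theorem ker_L_spanned_by_sech
    (f : ℝ → ℝ) (hf : ContDiff ℝ 2 f)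
    (h1 : Integrable (fun ξ => (f ξ) ^ 2))
    (h2 : Integrable (fun ξ => (deriv (deriv f) ξ) ^ 2))
    (hker : ∀ ξ, -deriv (deriv f) ξ + (1 - 2 * (1 / Real.cosh ξ) ^ 2) * f ξ = 0) :
    ∃ c : ℝ, ∀ ξ, f ξ = c * (1 / Real.cosh ξ) := by
  obtain ⟨k, c, h⟩ := general_solution f hf hker
  have hk : k = 0 := by
    have hint : Integrable (fun ξ => 2 * (f ξ) ^ 2 + 2 * (f (-ξ)) ^ 2) :=
      (h1.const_mul 2).add (h1.comp_neg.const_mul 2)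
    have hlow : ∀ x ∈ Set.Ioi (1 : ℝ), k ^ 2 ≤ 2 * (f x) ^ 2 + 2 * (f (-x)) ^ 2 := by
      intro x hx
      have hx : 1 < x := hx
      have hc := Real.cosh_pos x
      have hs : 1 ≤ Real.sinh x := hx.le.trans (Real.self_le_sinh_iff.2 (by linarith))
      have ha := h x
      have hb := h (-x)
      rw [Real.cosh_neg, Real.sinh_neg] at hb
      have e : f x - f (-x) = k * (Real.sinh x + x / Real.cosh x) := by
        field_simp
        linarith
      have hge : 1 ≤ Real.sinh x + x / Real.cosh x := by
        have : 0 ≤ x / Real.cosh x := by positivity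
        linarith
      have hsq : k ^ 2 ≤ (f x - f (-x)) ^ 2 := by
        rw [e, mul_pow]
        exact le_mul_of_one_le_right (sq_nonneg k) (one_le_pow₀ hge)
      nlinarith [sq_nonneg (f x + f (-x))]
    have hci : IntegrableOn (fun _ : ℝ => k ^ 2) (Set.Ioi 1) := by
      refine Integrable.mono' hint.integrableOn aestronglyMeasurable_const ?_
      filter_upwards [ae_restrict_mem measurableSet_Ioi] with x hx
      rw [Real.norm_of_nonneg (sq_nonneg k)]
      exact hlow x hx
    -- A constant is integrable on a half-line of infinite measure only if it vanishes.
    simpa [integrableOn_const_iff] using hci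
  refine ⟨c, fun x => ?_⟩
  have hc := (Real.cosh_pos x).ne'
  have hx := h x
  rw [hk] at hx
  field_simp
  linarith
end

section
/- Let 0 < H₃ < 1 and let β_T : ℝ → ℝ be the strictly decreasing solution of β_T' = H₃ − sin β_T with lim_{ξ→−∞} β_T = π − arcsin H₃ and lim_{ξ→+∞} β_T = arcsin H₃. If f : ℝ → ℝ is a C² function with f, f'' ∈ L²(ℝ) satisfying −f'' + (cos 2β_T(ξ) + 3 H₃ sin β_T(ξ) − H₃²) f = 0 on ℝ, then f = 0. -/
open MeasureTheory Filter Real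

/-!
With `w = sin β_T - H₃ > 0` one has `w' = -cos β_T · w`, and the potential equals
`w''/w + 2 H₃ sin β_T - H₃²`, where `2 H₃ sin β_T - H₃² ≥ H₃²` because `sin β_T ≥ H₃`.
Hence for a solution `f` of `N f = 0` and `u = f' - (w'/w) f = f' + cos β_T · f`,
`(f u)' = u² + (2 H₃ sin β_T - H₃²) f² ≥ H₃² f²`, so `f u` is nondecreasing.
Were `f u` nonzero somewhere, then along a half-line (to the right if positive, to the left if
negative) it would stay away from zero by some `δ > 0`, and the derivative of `f²` in the outward
direction would be at least `2 (δ - f²)`. This differential inequality keeps `f²` above `δ / 2`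
far out, contradicting `f ∈ L²` (`not_integrable_of_deriv_ge`). So `f u = 0` identically,
its derivative vanishes, and `f = 0`.
-/

/-- A nonnegative function with `h' ≥ 2 (δ - h)` on a half-line satisfies
`h ≥ δ (1 - exp (-2 (x - x₀)))` there, hence is bounded below at infinity. -/
theorem not_integrable_of_deriv_ge {h h' : ℝ → ℝ} {x₀ δ : ℝ} (hδ : 0 < δ)
    (hpos : ∀ x, 0 ≤ h x) (hd : ∀ x, HasDerivAt h (h' x) x)
    (hge : ∀ x, x₀ ≤ x → 2 * (δ - h x) ≤ h' x) : ¬ Integrable h := by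
  intro hint
  have hE : ∀ x, HasDerivAt (fun y => Real.exp (2 * (y - x₀)) * (h y - δ))
      (Real.exp (2 * (x - x₀)) * (2 * (h x - δ) + h' x)) x := by
    intro x
    have h1 : HasDerivAt (fun y => 2 * (y - x₀)) (2 * 1) x :=
      ((hasDerivAt_id x).sub_const x₀).const_mul 2
    refine (h1.exp.mul ((hd x).sub_const δ)).congr_deriv ?_
    ring
  have hmono : MonotoneOn (fun y => Real.exp (2 * (y - x₀)) * (h y - δ)) (Set.Ici x₀) := by
    apply monotoneOn_of_deriv_nonneg (convex_Ici x₀)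
    · exact fun x _ => (hE x).continuousAt.continuousWithinAt
    · exact fun x _ => (hE x).differentiableAt.differentiableWithinAt
    · intro x hx
      rw [interior_Ici] at hx
      rw [(hE x).deriv]
      have := hge x (le_of_lt hx)
      exact mul_nonneg (Real.exp_pos _).le (by linarith)
  have hlow : Set.Ici (x₀ + 1) ⊆ {x | δ / 2 ≤ h x} := by
    intro x hx
    have hx' : x₀ + 1 ≤ x := hx
    have hm := hmono (Set.mem_Ici.2 le_rfl) (Set.mem_Ici.2 (by linarith : x₀ ≤ x))
      (by linarith)
    simp only [sub_self, mul_zero, Real.exp_zero, one_mul] at hm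
    have he : 2 ≤ Real.exp (2 * (x - x₀)) := by
      have := Real.add_one_le_exp (2 * (x - x₀))
      linarith
    have h0 := hpos x₀
    show δ / 2 ≤ h x
    by_contra! hlt
    nlinarith
  have hfin := hint.measure_ge_lt_top (half_pos hδ)
  have := lt_of_le_of_lt (measure_mono hlow) hfin
  simp at this

theorem le_sin_of_mem_Icc {H b : ℝ} (h0 : 0 < H) (h1 : H < 1) (hl : Real.arcsin H ≤ b)
    (hu : b ≤ π - Real.arcsin H) : H ≤ Real.sin b := by
  have hs : Real.sin (Real.arcsin H) = H := Real.sin_arcsin (by linarith) h1.le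
  have ha := Real.neg_pi_div_two_le_arcsin H
  rcases le_total b (π / 2) with hb | hb
  · have := Real.sin_le_sin_of_le_of_le_pi_div_two ha hb hl
    rwa [hs] at this
  · have := Real.sin_le_sin_of_le_of_le_pi_div_two ha
      (by linarith : π - b ≤ π / 2) (by linarith : Real.arcsin H ≤ π - b)
    rwa [hs, Real.sin_pi_sub] at this

/-- The Schrödinger operator N = −d²/dξ² + cos 2β_T + 3H₃ sin β_T − H₃² arising in
the transverse-field case has trivial kernel in H²(ℝ). -/
theorem ker_N_trivial
    (H₃ : ℝ) (h0 : 0 < H₃) (h1 : H₃ < 1)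
    (βT : ℝ → ℝ) (hβT : ContDiff ℝ 1 βT)
    (hode : ∀ ξ, deriv βT ξ = H₃ - Real.sin (βT ξ))
    (hanti : StrictAnti βT)
    (hbot : Tendsto βT atBot (nhds (π - Real.arcsin H₃)))
    (htop : Tendsto βT atTop (nhds (Real.arcsin H₃)))
    (f : ℝ → ℝ) (hf : ContDiff ℝ 2 f)
    (hL2 : Integrable (fun ξ => (f ξ) ^ 2))
    (hL2'' : Integrable (fun ξ => (deriv (deriv f) ξ) ^ 2))
    (hker : ∀ ξ, -deriv (deriv f) ξ +
      (Real.cos (2 * βT ξ) + 3 * H₃ * Real.sin (βT ξ) - H₃ ^ 2) * f ξ = 0) :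
    f = 0 := by
  have hsin : ∀ x, H₃ ≤ Real.sin (βT x) := fun x =>
    le_sin_of_mem_Icc h0 h1 (hanti.antitone.le_of_tendsto htop x)
      (hanti.antitone.ge_of_tendsto hbot x)
  have hβd : ∀ x, HasDerivAt βT (H₃ - Real.sin (βT x)) x := fun x =>
    hode x ▸ (hβT.differentiable (by norm_num) x).hasDerivAt
  have hfd : ∀ x, HasDerivAt f (deriv f x) x := fun x =>
    (hf.differentiable (by norm_num) x).hasDerivAt
  have hf1 : ContDiff ℝ 1 (deriv f) := ((contDiff_succ_iff_deriv (n := 1)).1 hf).2.2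
  have hfd2 : ∀ x, HasDerivAt (deriv f) (deriv (deriv f) x) x := fun x =>
    (hf1.differentiable (by norm_num) x).hasDerivAt
  let G : ℝ → ℝ := fun x => f x * (deriv f x + Real.cos (βT x) * f x)
  have hG : ∀ x, HasDerivAt G ((deriv f x + Real.cos (βT x) * f x) ^ 2 +
      (2 * H₃ * Real.sin (βT x) - H₃ ^ 2) * f x ^ 2) x := by
    intro x
    refine ((hfd x).mul ((hfd2 x).add ((hβd x).cos.mul (hfd x)))).congr_deriv ?_
    have hk := hker x
    rw [Real.cos_two_mul] at hk
    have hc := Real.sin_sq_add_cos_sq (βT x)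
    simp only [Pi.add_apply, Pi.mul_apply]
    linear_combination (-f x) * hk + f x ^ 2 * hc
  have hcoef : ∀ x, H₃ ^ 2 ≤ 2 * H₃ * Real.sin (βT x) - H₃ ^ 2 := fun x => by
    nlinarith [hsin x]
  have hGmono : Monotone G := by
    apply monotone_of_deriv_nonneg (fun x => (hG x).differentiableAt)
    intro x
    rw [(hG x).deriv]
    have := hcoef x
    have : 0 ≤ 2 * H₃ * Real.sin (βT x) - H₃ ^ 2 := le_trans (sq_nonneg _) this
    positivity
  have hsq : ∀ x, HasDerivAt (fun y => f y ^ 2) (2 * f x * deriv f x) x := fun x => by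
    exact ((hfd x).pow 2).congr_deriv (by simp)
  have hG0 : ∀ x, G x = 0 := by
    intro x₀
    by_contra hne
    rcases lt_or_gt_of_ne hne with hneg | hpos
    · -- The reflection `y ↦ f (-y) ^ 2` turns the left half-line into a right one.
      refine not_integrable_of_deriv_ge (h := fun y => f (-y) ^ 2)
        (h' := fun y => -(2 * f (-y) * deriv f (-y))) (x₀ := -x₀) (δ := -G x₀)
        (by linarith) (fun _ => sq_nonneg _) ?_ ?_ hL2.comp_neg
      · intro y
        refine ((hsq (-y)).comp y (hasDerivAt_neg y)).congr_deriv ?_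
        ring
      · intro y hy
        have hm : G (-y) ≤ G x₀ := hGmono (by linarith)
        have hm' : f (-y) * (deriv f (-y) + Real.cos (βT (-y)) * f (-y)) ≤ G x₀ := hm
        have hc := Real.neg_one_le_cos (βT (-y))
        show 2 * (-G x₀ - f (-y) ^ 2) ≤ -(2 * f (-y) * deriv f (-y))
        nlinarith [mul_nonneg (sq_nonneg (f (-y))) (by linarith : 0 ≤ 1 + Real.cos (βT (-y)))]
    · refine not_integrable_of_deriv_ge (x₀ := x₀) (δ := G x₀) hpos
        (fun _ => sq_nonneg _) hsq ?_ hL2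
      intro y hy
      have hm : G x₀ ≤ f y * (deriv f y + Real.cos (βT y) * f y) := hGmono hy
      have hc := Real.cos_le_one (βT y)
      nlinarith [mul_nonneg (sq_nonneg (f y)) (by linarith : 0 ≤ 1 - Real.cos (βT y))]
  funext x
  have hd0 := (hG x).deriv
  rw [show G = fun _ => 0 from funext hG0, deriv_const] at hd0
  have hH : 0 < H₃ ^ 2 := by positivity
  have h2 : f x ^ 2 = 0 := by
    nlinarith [hcoef x, sq_nonneg (f x), sq_nonneg (deriv f x + Real.cos (βT x) * f x),
      mul_nonneg (sub_nonneg.2 (hcoef x)) (sq_nonneg (f x))]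
  simpa using h2
end

section
/- Let K₂ ≥ 0 and let m : ℝ → ℝ³ be a continuously differentiable profile with |m(ξ)| = 1 for all ξ, m' ∈ L²(ℝ), and lim_{ξ→+∞} m(ξ) = x̂, lim_{ξ→−∞} m(ξ) = −x̂. Then E(m) = ½ ∫_ℝ |m'|² dξ + ½ ∫_ℝ (1 − (m·x̂)² + K₂ (m·ŷ)²) dξ ≥ 2, and equality holds for the Bloch wall m_W(ξ) = (tanh ξ, 0, sech ξ), i.e. E(m_W) = 2. In particular m_W is a minimizer of E subject to these boundary conditions. -/
/-!
Write `u = m · x̂`. Differentiating `|m|² = 1` gives `m · m' = 0`, so Cauchy–Schwarz in the plane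
orthogonal to `x̂` yields `u'² ≤ (1 - u²) |m'|²`, and then
`2 u' ≤ |m'|² + (1 - u²)` by the arithmetic–geometric mean inequality. The right side is at most
the integrand of `2 E`, since `K₂ ≥ 0`. Integrating over `ℝ`, the left side telescopes to
`2 (u(+∞) - u(-∞)) = 4`, which is `2 ≤ E(m)`.

For the Bloch wall both integrands equal `sech²`, the derivative of `tanh`, so that
`E(m_W) = ∫ sech² = 2`.
-/

open MeasureTheory Filter

noncomputable section

/-- Standard basis vector along the wire axis. -/
def xhat : Fin 3 → ℝ := ![1, 0, 0]

/-- Standard basis vector along the hard axis. -/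
def yhat : Fin 3 → ℝ := ![0, 1, 0]

/-- Euclidean dot product on ℝ³. -/
def dot3 (a b : Fin 3 → ℝ) : ℝ := a 0 * b 0 + a 1 * b 1 + a 2 * b 2

/-- Euclidean norm on ℝ³. -/
def norm3 (a : Fin 3 → ℝ) : ℝ := Real.sqrt (dot3 a a)

/-- The static Bloch wall profile m_W(ξ) = (tanh ξ, 0, sech ξ). -/
def mW (ξ : ℝ) : Fin 3 → ℝ := ![Real.tanh ξ, 0, 1 / Real.cosh ξ]

/-- The reduced one-dimensional micromagnetic energy. -/
def energy (K₂ : ℝ) (m : ℝ → Fin 3 → ℝ) : ℝ :=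
  (∫ ξ : ℝ, dot3 (deriv m ξ) (deriv m ξ)) / 2 +
  (∫ ξ : ℝ, (1 - (dot3 (m ξ) xhat) ^ 2 + K₂ * (dot3 (m ξ) yhat) ^ 2)) / 2

/-- The pointwise calibration inequality, with `m = (a, b, c)` and `m' = (p, q, r)`. The absolute
value also supplies the integrable bound on the derivative of `m · x̂`. -/
lemma abs_le_energy_density {a b c p q r : ℝ} (h : a * a + b * b + c * c = 1)
    (ho : a * p + b * q + c * r = 0) :
    |p| ≤ ((p * p + q * q + r * r) + (1 - a ^ 2)) / 2 := by
  have hu : 0 ≤ 1 - a ^ 2 := by nlinarith [sq_nonneg b, sq_nonneg c]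
  have hcs : p ^ 2 ≤ (1 - a ^ 2) * (p * p + q * q + r * r) := by
    have e : (b * b + c * c) * (q * q + r * r) - (a * p) ^ 2 = (b * r - c * q) ^ 2 := by
      rw [show a * p = -(b * q + c * r) by linarith]; ring
    have hb : b * b + c * c = 1 - a ^ 2 := by linarith
    rw [hb] at e
    nlinarith [sq_nonneg (b * r - c * q)]
  refine abs_le_of_sq_le_sq ?_ (by nlinarith [sq_nonneg p, sq_nonneg q, sq_nonneg r])
  nlinarith [sq_nonneg ((p * p + q * q + r * r) - (1 - a ^ 2))]

/-- The gradient of `|m|² = 1` is orthogonality of `m` and `m'`. -/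
lemma dot3_deriv_eq_zero {m : ℝ → Fin 3 → ℝ} {m' : Fin 3 → ℝ} {ξ : ℝ}
    (hm : ∀ x, dot3 (m x) (m x) = 1) (hd : HasDerivAt m m' ξ) : dot3 (m ξ) m' = 0 := by
  have h := hasDerivAt_pi.1 hd
  have h1 := (((h 0).mul (h 0)).add ((h 1).mul (h 1))).add ((h 2).mul (h 2))
  have h2 : HasDerivAt (fun x => dot3 (m x) (m x)) 0 ξ := by
    simp only [hm]; exact hasDerivAt_const ξ 1
  have h3 := h1.unique h2
  unfold dot3
  linarith

lemma two_le_energy {K₂ : ℝ} (hK : 0 ≤ K₂) {m : ℝ → Fin 3 → ℝ} (hC : ContDiff ℝ 1 m)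
    (hn : ∀ ξ, norm3 (m ξ) = 1)
    (hi : Integrable (fun ξ => dot3 (deriv m ξ) (deriv m ξ)))
    (hj : Integrable (fun ξ => 1 - (dot3 (m ξ) xhat) ^ 2 + K₂ * (dot3 (m ξ) yhat) ^ 2))
    (htop : Tendsto m atTop (nhds xhat)) (hbot : Tendsto m atBot (nhds (-xhat))) :
    2 ≤ energy K₂ m := by
  have hm : ∀ ξ, dot3 (m ξ) (m ξ) = 1 := fun ξ => Real.sqrt_eq_one.1 (hn ξ)
  obtain ⟨hdiff, hcont⟩ := contDiff_one_iff_deriv.1 hC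
  have hd : ∀ ξ, HasDerivAt m (deriv m ξ) ξ := fun ξ => (hdiff ξ).hasDerivAt
  have hbound : ∀ ξ, |deriv m ξ 0| ≤ (dot3 (deriv m ξ) (deriv m ξ) +
      (1 - (dot3 (m ξ) xhat) ^ 2 + K₂ * (dot3 (m ξ) yhat) ^ 2)) / 2 := by
    intro ξ
    have h := abs_le_energy_density (hm ξ) (dot3_deriv_eq_zero hm (hd ξ))
    have hx : dot3 (m ξ) xhat = m ξ 0 := by simp [dot3, xhat]
    have hy : 0 ≤ K₂ * (dot3 (m ξ) yhat) ^ 2 := by positivity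
    rw [hx]
    unfold dot3 at hy ⊢
    linarith
  have hint := (hi.add hj).div_const 2
  have hu : Integrable (fun ξ => deriv m ξ 0) :=
    hint.mono' ((continuous_apply 0).comp hcont).aestronglyMeasurable
      (Eventually.of_forall hbound)
  have hval : ∫ ξ, deriv m ξ 0 = 1 - (-1) :=
    integral_of_hasDerivAt_of_tendsto (fun ξ => hasDerivAt_pi.1 (hd ξ) 0) hu
      (by simpa [xhat] using tendsto_pi_nhds.1 hbot 0)
      (by simpa [xhat] using tendsto_pi_nhds.1 htop 0)
  have hle := integral_mono hu hint fun ξ => (le_abs_self _).trans (hbound ξ)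
  rw [hval, integral_div] at hle
  simp only [Pi.add_apply] at hle
  rw [integral_add hi hj] at hle
  unfold energy
  linarith

lemma hasDerivAt_tanh (x : ℝ) : HasDerivAt Real.tanh (1 / Real.cosh x ^ 2) x := by
  have h := (Real.hasDerivAt_sinh x).div (Real.hasDerivAt_cosh x) (Real.cosh_pos x).ne'
  have e : Real.tanh = Real.sinh / Real.cosh := funext Real.tanh_eq_sinh_div_cosh
  have hn : Real.cosh x * Real.cosh x - Real.sinh x * Real.sinh x = 1 := by
    linarith [Real.cosh_sq x]
  rwa [hn, ← e] at h

lemma tendsto_tanh_atTop : Tendsto Real.tanh atTop (nhds 1) := by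
  have e : Real.tanh = fun x => (1 - Real.exp (-(2 * x))) / (1 + Real.exp (-(2 * x))) := by
    funext x
    rw [Real.tanh_eq, show -(2 * x) = -x + -x by ring, Real.exp_add, Real.exp_neg]
    field_simp
  have h : Tendsto (fun x : ℝ => Real.exp (-(2 * x))) atTop (nhds 0) :=
    Real.tendsto_exp_neg_atTop_nhds_zero.comp (tendsto_id.const_mul_atTop two_pos)
  rw [e]
  simpa [Pi.div_def] using (h.const_sub 1).div (h.const_add 1) (by norm_num)

lemma tendsto_tanh_atBot : Tendsto Real.tanh atBot (nhds (-1)) := by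
  simpa [Function.comp_def, Real.tanh_neg] using
    (tendsto_tanh_atTop.comp tendsto_neg_atBot_atTop).neg

/-- Comparison with `1 / (1 + x²)`, from `cosh² = 1 + sinh²` and `|x| ≤ |sinh x|`. -/
lemma integrable_sech_sq : Integrable (fun x : ℝ => 1 / Real.cosh x ^ 2) := by
  refine integrable_inv_one_add_sq.mono' ?_ (Eventually.of_forall fun x => ?_)
  · exact (continuous_const.div (Real.continuous_cosh.pow 2)
      fun x => (pow_pos (Real.cosh_pos x) 2).ne').aestronglyMeasurable
  · have hs : x ^ 2 ≤ Real.sinh x ^ 2 := by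
      rcases le_total 0 x with h | h
      · exact pow_le_pow_left₀ h (Real.self_le_sinh_iff.2 h) 2
      · nlinarith [Real.sinh_le_self_iff.2 h]
    rw [Real.norm_of_nonneg (by positivity), one_div]
    exact inv_anti₀ (by positivity) (by linarith [Real.cosh_sq x])

lemma integral_sech_sq : ∫ x : ℝ, 1 / Real.cosh x ^ 2 = 2 := by
  rw [integral_of_hasDerivAt_of_tendsto hasDerivAt_tanh integrable_sech_sq
    tendsto_tanh_atBot tendsto_tanh_atTop]
  norm_num

lemma deriv_mW (ξ : ℝ) :
    deriv mW ξ = ![1 / Real.cosh ξ ^ 2, 0, -Real.sinh ξ / Real.cosh ξ ^ 2] := by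
  refine HasDerivAt.deriv (hasDerivAt_pi.2 fun i => ?_)
  fin_cases i
  · exact hasDerivAt_tanh ξ
  · exact hasDerivAt_const ξ 0
  · simpa [mW, Pi.inv_def] using (Real.hasDerivAt_cosh ξ).inv (Real.cosh_pos ξ).ne'

lemma energy_mW (K₂ : ℝ) : energy K₂ mW = 2 := by
  have h1 : ∀ ξ, dot3 (deriv mW ξ) (deriv mW ξ) = 1 / Real.cosh ξ ^ 2 := by
    intro ξ
    have hc := (Real.cosh_pos ξ).ne'
    simp only [deriv_mW, dot3, Matrix.cons_val]
    field_simp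
    linarith [Real.cosh_sq ξ]
  have h2 : ∀ ξ, 1 - (dot3 (mW ξ) xhat) ^ 2 + K₂ * (dot3 (mW ξ) yhat) ^ 2
      = 1 / Real.cosh ξ ^ 2 := by
    intro ξ
    have hc := (Real.cosh_pos ξ).ne'
    simp only [mW, dot3, xhat, yhat, Matrix.cons_val, Real.tanh_eq_sinh_div_cosh]
    field_simp
    linarith [Real.cosh_sq ξ]
  simp only [energy, h1, h2, integral_sech_sq]
  norm_num

/-- The Bloch wall m_W minimizes the reduced micromagnetic energy, with E(m_W) = 2,
among unit-length profiles with tail-to-tail boundary conditions ±x̂. -/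
theorem bloch_wall_minimizes_energy (K₂ : ℝ) (hK : 0 ≤ K₂) :
    (∀ m : ℝ → Fin 3 → ℝ, ContDiff ℝ 1 m →
      (∀ ξ, norm3 (m ξ) = 1) →
      Integrable (fun ξ => dot3 (deriv m ξ) (deriv m ξ)) →
      Integrable (fun ξ => 1 - (dot3 (m ξ) xhat) ^ 2 + K₂ * (dot3 (m ξ) yhat) ^ 2) →
      Tendsto m atTop (nhds xhat) →
      Tendsto m atBot (nhds (-xhat)) →
      2 ≤ energy K₂ m) ∧
    energy K₂ mW = 2 := by
  exact ⟨fun _ hC hn hi hj htop hbot => two_le_energy hK hC hn hi hj htop hbot, energy_mW K₂⟩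

end
end
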